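/- The second player, Green, has a winning strategy in Sim⁺, the avoidance⁺ variant of Sim in which at each move the player to move colors a nonempty set of one or more so-far uncolored edges in his own color (with the creation of a triangle all of whose edges have the mover's color still forbidden), and the first player unable to make a legal move loses. -/

import Mathlib

/-- The 15 edges of the complete graph `K_6`: unordered pairs of distinct vertices. -/
abbrev Edge6 := {e : Sym2 (Fin 6) // ¬ e.IsDiag}

/-- The edge of `K_6` joining two distinct vertices. -/
def mkEdge6 (a b : Fin 6) (h : a ≠ b) : Edge6 :=
  ⟨s(a, b), by simpa using h⟩

/-- A Sim⁺ position: a partial coloring of the edges of `K_6`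
(`none` = uncolored, `some true` = Red, `some false` = Green). -/
abbrev Pos := Edge6 → Option Bool

/-- The initial position: all edges uncolored. -/
def startPos : Pos := fun _ => none

/-- Coloring all edges of the set `s` in color `c`. -/
def colorSet (p : Pos) (c : Bool) (s : Finset Edge6) : Pos :=
  fun e => if e ∈ s then some c else p e

/-- Position `p` contains a triangle all three of whose edges have color `c`. -/
def HasMonoTri (p : Pos) (c : Bool) : Prop :=
  ∃ a b d : Fin 6, ∃ hab : a ≠ b, ∃ had : a ≠ d, ∃ hbd : b ≠ d,
    p (mkEdge6 a b hab) = some c ∧ p (mkEdge6 a d had) = some c ∧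
      p (mkEdge6 b d hbd) = some c

/-- A legal Sim⁺ move for player `c` at position `p`: color a nonempty set of so-far
uncolored edges in one's own color, but the resulting position may not contain a
monochromatic triangle in one's own color. -/
def Legal (p : Pos) (c : Bool) (s : Finset Edge6) : Prop :=
  s.Nonempty ∧ (∀ e ∈ s, p e = none) ∧ ¬ HasMonoTri (colorSet p c s) c

/-- The player making the `k`-th move (moves are numbered from 0):
Red (`true`) moves first and the players alternate. -/
def playerAt (k : ℕ) : Bool := decide (k % 2 = 0)

/-- The position reached from `p` after the list of moves `ms` (each move a set of
edges), the first element of `ms` being made by the player moving at step `k`. -/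
def posFrom (p : Pos) (k : ℕ) : List (Finset Edge6) → Pos
  | [] => p
  | s :: ms => posFrom (colorSet p (playerAt k) s) (k + 1) ms

/-- The position reached from the empty board after the list of moves `ms`. -/
def posAfter (ms : List (Finset Edge6)) : Pos := posFrom startPos 0 ms

/-- A play (list of moves, alternately by Red and Green, Red first) in which Green
follows the strategy `σ`: every move is legal for the player making it, and every move
of Green is the one prescribed by `σ` at the current position. -/
def FollowsGreen (σ : Pos → Finset Edge6) (ms : List (Finset Edge6)) : Prop :=
  ∀ i, ∀ h : i < ms.length,
    Legal (posAfter (ms.take i)) (playerAt i) (ms.get ⟨i, h⟩) ∧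
    (playerAt i = false → ms.get ⟨i, h⟩ = σ (posAfter (ms.take i)))

namespace SimProof

def ix (a b : Fin 6) : ℕ :=
  (([[15, 0, 1, 2, 3, 4], [0, 15, 5, 6, 7, 8], [1, 5, 15, 9, 10, 11], [2, 6, 9, 15, 12, 13], [3, 7, 10, 12, 15, 14], [4, 8, 11, 13, 14, 15]] : List (List ℕ)).getD a.1 []).getD b.1 15

/-- Each edge (as a bit), with the pairs of edges completing it to a triangle. -/
def edgeTab : List (ℕ × List ℕ) :=
  [(1, [34, 68, 136, 272]),
   (2, [33, 516, 1032, 2064]),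
   (4, [65, 514, 4104, 8208]),
   (8, [129, 1026, 4100, 16400]),
   (16, [257, 2050, 8196, 16392]),
   (32, [3, 576, 1152, 2304]),
   (64, [5, 544, 4224, 8448]),
   (128, [9, 1056, 4160, 16640]),
   (256, [17, 2080, 8256, 16512]),
   (512, [6, 96, 5120, 10240]),
   (1024, [10, 160, 4608, 18432]),
   (2048, [18, 288, 8704, 17408]),
   (4096, [12, 192, 1536, 24576]),
   (8192, [20, 320, 2560, 20480]),
   (16384, [24, 384, 3072, 12288])]

/-- Action of the five adjacent transpositions of vertices on edge indices. -/
def swTab : List (List ℕ) :=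
  [[0, 5, 6, 7, 8, 1, 2, 3, 4, 9, 10, 11, 12, 13, 14],
   [1, 0, 2, 3, 4, 5, 9, 10, 11, 6, 7, 8, 12, 13, 14],
   [0, 2, 1, 3, 4, 6, 5, 7, 8, 9, 12, 13, 10, 11, 14],
   [0, 1, 3, 2, 4, 5, 7, 6, 8, 10, 9, 11, 12, 14, 13],
   [0, 1, 2, 4, 3, 5, 6, 8, 7, 9, 11, 10, 13, 12, 14]]

def triTab : List ℕ := [35, 69, 137, 273, 518, 1034, 2066, 4108, 8212, 16408, 608, 1184, 2336, 4288, 8512, 16768, 5632, 10752, 19456, 28672]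

/-- The ten complete bipartite graphs `K_{3,3}`. -/
def kTab : List ℕ := [21878, 26862, 26323, 23221, 23371, 4060, 26413, 13242, 15481, 15751]

/-- Replies for Green in non-immediate positions: `(R, G, g)`. -/
def replyTab : List (ℕ × ℕ × ℕ) :=
  [(1, 0, 16384), (3, 0, 16384), (3, 16384, 8192), (7, 16384, 10368),
   (7, 24576, 2176), (9, 16384, 64), (13, 16448, 1042), (25, 16384, 10240),
   (25, 16448, 2048), (36, 0, 16384), (44, 0, 25744), (44, 16384, 9360),
   (104, 0, 24592), (164, 16384, 8208), (259, 24576, 2048), (513, 16384, 64),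
   (517, 16448, 32), (521, 16384, 10240), (521, 16448, 5152), (545, 16448, 4),
   (549, 16448, 8320), (641, 16448, 5152), (648, 0, 21776), (656, 0, 16649),
   (1025, 16384, 2048), (1029, 16384, 10240), (1029, 18432, 8192), (1041, 16384, 10400),
   (1041, 18432, 8352), (1537, 16384, 10400), (1537, 16448, 10272), (1537, 18432, 8352),
   (2057, 16448, 5124), (2307, 24576, 1536), (3073, 16384, 68), (3077, 16384, 8704),
   (4099, 16384, 10240), (4099, 24576, 2048), (4132, 16384, 9744), (4609, 16448, 10368),
   (5121, 16384, 10432), (5121, 18432, 8384), (6145, 16384, 9728), (7169, 16384, 8704),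
   (7169, 16452, 8192), (8201, 16448, 5376), (9217, 18432, 4608), (9729, 18432, 4096),
   (12291, 16384, 2560), (13313, 18432, 512), (15361, 16384, 512), (15361, 16452, 34)]


def illegal (R : ℕ) (ps : List ℕ) : Bool := ps.any fun q => Nat.beq (Nat.land R q) q

def enumR (k : ℕ → Bool) : List (ℕ × List ℕ) → ℕ → Bool
  | [], 0 => k 0
  | [], R + 1 => k (R + 1)
  | e :: l, R => (illegal R e.2 || enumR k l (Nat.lor R e.1)) && enumR k l R

def bnd : List (ℕ × List ℕ) → ℕ → ℕ → Bool
  | [], _, _ => true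
  | e :: l, R, 0 => illegal R e.2 && bnd l R 0
  | e :: l, R, k + 1 =>
    (illegal R e.2 || bnd l (Nat.lor R e.1) k) && bnd l R (k + 1)

def inM (X b : ℕ) : Bool := !(Nat.beq (Nat.land X b) 0)

def freeE (R G : ℕ) : List (ℕ × List ℕ) := edgeTab.filter fun e => !(inM R e.1 || inM G e.1)

def leaf (R G K : ℕ) : Bool :=
  Nat.beq (Nat.land G K) G &&
  (let l := freeE R G
   let n := (l.filter fun e => inM K e.1 && illegal R e.2).length
   let o := l.filter fun e => !(inM K e.1)
   if (l.any fun e => inM K e.1 && !(illegal R e.2)) then bnd o R n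
   else match n with
     | 0 => false
     | n + 1 => bnd o R n)

def tfb (X : ℕ) : Bool := triTab.all fun t => !(Nat.beq (Nat.land X t) t)

def pm : List ℕ → ℕ → ℕ
  | [], _ => 0
  | i :: l, m => Nat.add (Nat.mod (Nat.shiftRight m i) 2) (Nat.mul 2 (pm l m))

def chkR : ℕ → ℕ → ℕ → Bool
  | 0, _, _ => false
  | f + 1, R, G =>
    enumR (fun X => Nat.beq X R
      || (swTab.filter fun l => Nat.beq (pm l R) R && Nat.beq (pm l G) G).any
            (fun l => Nat.blt (pm l X) X)
      || kTab.any (leaf X G)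
      || replyTab.any fun t => Nat.beq t.1 X && Nat.beq t.2.1 G && Nat.blt t.2.2 32768
            && !(Nat.beq t.2.2 0)
            && Nat.beq (Nat.land t.2.2 (Nat.lor X G)) 0 && tfb (Nat.lor G t.2.2)
            && chkR f X (Nat.lor G t.2.2)) (freeE R G) R

set_option linter.unusedSimpArgs false

/-! ### Masks -/

def Sb (A B : ℕ) : Prop := ∀ i, A.testBit i = true → B.testBit i = true

def Dj (A B : ℕ) : Prop := ∀ i, A.testBit i = true → B.testBit i = true → False

def Tfr (X : ℕ) : Prop := ∀ a b d : Fin 6, a ≠ b → a ≠ d → b ≠ d →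
  X.testBit (ix a b) = true → X.testBit (ix a d) = true → X.testBit (ix b d) = true → False

theorem Sb.refl (A : ℕ) : Sb A A := fun _ h => h
theorem Sb.trans {A B C : ℕ} (h : Sb A B) (h' : Sb B C) : Sb A C := fun i hi => h' i (h i hi)

theorem Sb.antisymm {A B : ℕ} (h : Sb A B) (h' : Sb B A) : A = B := by
  apply Nat.eq_of_testBit_eq
  intro i
  have := h i
  have := h' i
  cases hA : A.testBit i <;> cases hB : B.testBit i <;> simp_all

theorem Tfr.mono {A B : ℕ} (h : Sb A B) (hB : Tfr B) : Tfr A :=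
  fun a b d h1 h2 h3 x y z => hB a b d h1 h2 h3 (h _ x) (h _ y) (h _ z)

theorem lt_of_bits {A : ℕ} (h : ∀ i, A.testBit i = true → i < 15) : A < 2 ^ 15 := by
  apply Nat.lt_pow_two_of_testBit
  intro i hi
  by_contra hc
  have := h i (by simpa using hc)
  omega

theorem bits_lt {A i : ℕ} (h : A < 2 ^ 15) (hi : A.testBit i = true) : i < 15 := by
  by_contra hc
  have : A < 2 ^ i := lt_of_lt_of_le h (Nat.pow_le_pow_right (by norm_num) (by omega))
  rw [Nat.testBit_lt_two_pow this] at hi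
  simp at hi

/-- Green to move at `(X, G)` can move to a position satisfying `W`. -/
def GW (W : ℕ → ℕ → Prop) (X G : ℕ) : Prop :=
  ∃ Y, Y < 2 ^ 15 ∧ Sb G Y ∧ Y ≠ G ∧ Dj X Y ∧ Tfr Y ∧ W X Y

def ML : ℕ → ℕ → ℕ → Prop
  | 0 => fun _ _ => False
  | n + 1 => fun R G => ∀ X, X < 2 ^ 15 → Sb R X → X ≠ R → Dj X G → Tfr X → GW (ML n) X G

theorem GW.mono {W W' : ℕ → ℕ → Prop} (h : ∀ A B, W A B → W' A B) {X G : ℕ} (hW : GW W X G) :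
    GW W' X G := by
  obtain ⟨Y, h1, h2, h3, h4, h5, h6⟩ := hW
  exact ⟨Y, h1, h2, h3, h4, h5, h _ _ h6⟩

theorem ML_succ : ∀ n R G, ML n R G → ML (n + 1) R G := by
  intro n
  induction n with
  | zero => intro R G h; exact h.elim
  | succ n ih =>
    intro R G h X h1 h2 h3 h4 h5
    exact (h X h1 h2 h3 h4 h5).mono ih

theorem ML_mono {n m R G : ℕ} (hnm : n ≤ m) (h : ML n R G) : ML m R G := by
  induction hnm with
  | refl => exact h
  | step _ ih => exact ML_succ _ _ _ ih

/-! ### The counting lemma -/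

def card (X : ℕ) : ℕ := ((Finset.range 15).filter fun i => X.testBit i = true).card

theorem card_lt {A B : ℕ} (hB : B < 2 ^ 15) (h : Sb A B) (hne : B ≠ A) : card A < card B := by
  apply Finset.card_lt_card
  rw [Finset.ssubset_iff_of_subset]
  · by_contra hc
    push Not at hc
    apply hne
    refine Sb.antisymm ?_ h
    intro i hi
    have := hc i (by simp [hi, bits_lt hB hi])
    simp at this
    exact this.2
  · intro i hi
    simp at hi ⊢
    exact ⟨hi.1, h i hi.2⟩

theorem leaf_lemma (K : ℕ) (hK : Tfr K) : ∀ (k R G : ℕ) (P : Finset ℕ), G < 2 ^ 15 →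
    k ≤ P.card → (∀ i ∈ P, i < 15 ∧ K.testBit i = true ∧ G.testBit i = false ∧
      ∀ X, Sb R X → Tfr X → X.testBit i = false) → Sb G K →
    (∀ X, X < 2 ^ 15 → Sb R X → Dj X G → Tfr X → card X ≤ card R + k) →
    ML (k + 1) R G := by
  intro k
  induction k with
  | zero =>
    intro R G P _ _ _ _ hb X h1 h2 h3 h4 h5
    have := hb X h1 h2 h4 h5
    have := card_lt h1 h2 h3
    omega
  | succ k ih =>
    intro R G P hG hP hPP hGK hb X h1 h2 h3 h4 h5
    obtain ⟨i, hi⟩ : P.Nonempty := by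
      rw [← Finset.card_pos]; omega
    obtain ⟨i15, iK, iG, iX⟩ := hPP i hi
    have hs : Sb G (G ||| 2 ^ i) := by intro j hj; simp [hj]
    have hsK : Sb (G ||| 2 ^ i) K := by
      intro j hj
      simp [Nat.testBit_or, Nat.testBit_two_pow] at hj
      rcases hj with hj | hj
      · exact hGK j hj
      · subst hj; exact iK
    have hlt : (G ||| 2 ^ i) < 2 ^ 15 := by
      apply lt_of_bits
      intro j hj
      simp [Nat.testBit_or, Nat.testBit_two_pow] at hj
      rcases hj with hj | hj
      · exact bits_lt hG hj
      · omega
    refine ⟨G ||| 2 ^ i, hlt, hs, ?_, ?_, hK.mono hsK, ?_⟩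
    · intro hc
      have : (G ||| 2 ^ i).testBit i = true := by simp [Nat.testBit_or, Nat.testBit_two_pow]
      rw [hc, iG] at this
      simp at this
    · intro j hj hj'
      simp [Nat.testBit_or, Nat.testBit_two_pow] at hj'
      rcases hj' with hj' | hj'
      · exact h4 j hj hj'
      · subst hj'; have := iX X h2 h5; simp_all
    · apply ih X (G ||| 2 ^ i) (P.erase i) hlt
      · rw [Finset.card_erase_of_mem hi]; omega
      · intro j hj
        rw [Finset.mem_erase] at hj
        obtain ⟨j15, jK, jG, jX⟩ := hPP j hj.2
        refine ⟨j15, jK, ?_, fun Y hY hT => jX Y (h2.trans hY) hT⟩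
        simp [Nat.testBit_or, Nat.testBit_two_pow, jG]
        exact fun h => hj.1 h.symm
      · exact hsK
      · intro Y y1 y2 y3 y4
        have := hb Y y1 (h2.trans y2) (fun j a b => y3 j a (hs j b)) y4
        have := card_lt h1 h2 h3
        omega

/-! ### Correctness of the checker -/

def WF (e : ℕ × List ℕ) : Prop := ∃ i < 15, e.1 = 2 ^ i ∧ ∀ q ∈ e.2, ∃ a b d : Fin 6,
  a ≠ b ∧ a ≠ d ∧ b ≠ d ∧ ix a b = i ∧ q = 2 ^ (ix a d) ||| 2 ^ (ix b d)

theorem edgeTab_wf : ∀ e ∈ edgeTab, WF e := by unfold WF; decide +kernel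

theorem edgeTab_mem : ∀ i < 15, ∃ e ∈ edgeTab, e.1 = 2 ^ i := by decide +kernel

theorem edgeTab_nodup : (edgeTab.map Prod.fst).Nodup := by decide +kernel

theorem illegal_spec {R X i : ℕ} {e : ℕ × List ℕ} (he : WF e) (hi : e.1 = 2 ^ i)
    (h : illegal R e.2 = true) (hs : Sb R X) (hT : Tfr X) : X.testBit i = false := by
  obtain ⟨i', _, h2, h3⟩ := he
  have : i' = i := Nat.pow_right_injective (le_refl 2) (h2.symm.trans hi)
  subst this
  simp only [illegal, List.any_eq_true] at h
  obtain ⟨q, hq, hb⟩ := h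
  have hb : R &&& q = q := Nat.eq_of_beq_eq_true hb
  obtain ⟨a, b, d, n1, n2, n3, hix, rfl⟩ := h3 q hq
  by_contra hc
  simp only [Bool.not_eq_false] at hc
  refine hT a b d n1 n2 n3 (by rw [hix]; exact hc) (hs _ ?_) (hs _ ?_)
  · have := congrArg (fun z => z.testBit (ix a d)) hb
    simpa [Nat.testBit_or, Nat.testBit_and, Nat.testBit_two_pow] using this
  · have := congrArg (fun z => z.testBit (ix b d)) hb
    simpa [Nat.testBit_or, Nat.testBit_and, Nat.testBit_two_pow] using this

/-- `X` is contained in `R` together with the edges in `l`. -/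
def Cov (X R : ℕ) (l : List (ℕ × List ℕ)) : Prop :=
  ∀ i, X.testBit i = true → R.testBit i = true ∨ ∃ e ∈ l, e.1 = 2 ^ i

theorem Cov.skip {X R i : ℕ} {e : ℕ × List ℕ} {l} (h : Cov X R (e :: l)) (hi : e.1 = 2 ^ i)
    (hX : X.testBit i = false) : Cov X R l := by
  intro j hj
  rcases h j hj with h0 | ⟨e', he', h0⟩
  · exact Or.inl h0
  · rcases List.mem_cons.1 he' with rfl | he'
    · have : i = j := Nat.pow_right_injective (le_refl 2) (hi.symm.trans h0)
      subst this; simp_all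
    · exact Or.inr ⟨e', he', h0⟩

theorem Cov.take {X R i : ℕ} {e : ℕ × List ℕ} {l} (h : Cov X R (e :: l)) (hi : e.1 = 2 ^ i) :
    Cov X (R ||| 2 ^ i) l := by
  intro j hj
  rcases h j hj with h0 | ⟨e', he', h0⟩
  · left; simp [h0]
  · rcases List.mem_cons.1 he' with rfl | he'
    · have : i = j := Nat.pow_right_injective (le_refl 2) (hi.symm.trans h0)
      subst this; left; simp [Nat.testBit_or, Nat.testBit_two_pow]
    · exact Or.inr ⟨e', he', h0⟩

theorem sub_or {X R i : ℕ} (h : Sb R X) (hi : X.testBit i = true) : Sb (R ||| 2 ^ i) X := by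
  intro j hj
  simp [Nat.testBit_or, Nat.testBit_two_pow] at hj
  rcases hj with hj | hj
  · exact h j hj
  · subst hj; exact hi

theorem Cov.nil {X R : ℕ} (h : Cov X R []) : Sb X R := by
  intro i hi
  simpa using h i hi

theorem enumR_spec (k : ℕ → Bool) : ∀ (l : List (ℕ × List ℕ)) (R X : ℕ), (∀ e ∈ l, WF e) →
    enumR k l R = true → Sb R X → Cov X R l → Tfr X → k X = true := by
  intro l
  induction l with
  | nil =>
    intro R X _ h h1 h2 _
    have : X = R := h2.nil.antisymm h1
    subst this
    cases X <;> exact h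
  | cons e l ih =>
    intro R X hw h h1 h2 h3
    have he := hw e (by simp)
    have hl : ∀ e ∈ l, WF e := fun e h => hw e (by simp [h])
    obtain ⟨i, _, hi, _⟩ := id he
    simp only [enumR, Bool.and_eq_true, Bool.or_eq_true] at h
    cases hX : X.testBit i with
    | false => exact ih R X hl h.2 h1 (h2.skip hi hX) h3
    | true =>
      rcases h.1 with h | h
      · have := illegal_spec he hi h h1 h3
        simp_all
      · rw [hi] at h
        exact ih _ X hl h (sub_or h1 hX) (h2.take hi) h3

theorem card_or (R i : ℕ) : card (R ||| 2 ^ i) ≤ card R + 1 := by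
  refine le_trans (Finset.card_le_card (t := insert i
    ((Finset.range 15).filter fun i => R.testBit i = true)) ?_) (Finset.card_insert_le _ _)
  intro j hj
  simp [Nat.testBit_or, Nat.testBit_two_pow] at hj ⊢
  rcases hj with ⟨h, h' | h'⟩
  · exact Or.inr ⟨h, h'⟩
  · exact Or.inl h'.symm

theorem bnd_spec : ∀ (l : List (ℕ × List ℕ)) (R k X : ℕ), (∀ e ∈ l, WF e) →
    bnd l R k = true → Sb R X → Cov X R l → Tfr X → card X ≤ card R + k := by
  intro l
  induction l with
  | nil =>
    intro R k X _ h h1 h2 _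
    have : X = R := h2.nil.antisymm h1
    subst this
    omega
  | cons e l ih =>
    intro R k X hw h h1 h2 h3
    have he := hw e (by simp)
    have hl : ∀ e ∈ l, WF e := fun e h => hw e (by simp [h])
    obtain ⟨i, _, hi, _⟩ := id he
    cases k with
    | zero =>
      simp only [bnd, Bool.and_eq_true] at h
      exact ih R 0 X hl h.2 h1 (h2.skip hi (illegal_spec he hi h.1 h1 h3)) h3
    | succ k =>
      simp only [bnd, Bool.and_eq_true, Bool.or_eq_true] at h
      cases hX : X.testBit i with
      | false => exact ih R _ X hl h.2 h1 (h2.skip hi hX) h3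
      | true =>
        rcases h.1 with h | h
        · have := illegal_spec he hi h h1 h3
          simp_all
        · rw [hi] at h
          have := ih _ k X hl h (sub_or h1 hX) (h2.take hi) h3
          have : card (R.lor (2 ^ i)) ≤ card R + 1 := card_or R i
          omega

theorem inM_spec {X i : ℕ} {b : ℕ} (hb : b = 2 ^ i) : inM X b = X.testBit i := by
  subst hb
  have h : Nat.land X (2 ^ i) = (X.testBit i).toNat * 2 ^ i := Nat.and_two_pow X i
  unfold inM
  rw [h]
  cases X.testBit i
  · simp
  · have : (2 ^ i) ≠ 0 := by positivity
    simp only [Bool.toNat_true, one_mul, Bool.not_eq_true']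
    by_contra h
    exact this (Nat.eq_of_beq_eq_true (by simp at h))

theorem freeE_wf {R G : ℕ} : ∀ e ∈ freeE R G, WF e := by
  intro e he
  exact edgeTab_wf e (List.mem_filter.1 he).1

theorem mem_freeE {R G i : ℕ} (hi : i < 15) (hR : R.testBit i = false) (hG : G.testBit i = false) :
    ∃ e ∈ freeE R G, e.1 = 2 ^ i := by
  obtain ⟨e, he, h⟩ := edgeTab_mem i hi
  refine ⟨e, List.mem_filter.2 ⟨he, ?_⟩, h⟩
  simp [inM_spec h, hR, hG]

theorem freeE_free {R G i : ℕ} {e} (he : e ∈ freeE R G) (h : e.1 = 2 ^ i) :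
    R.testBit i = false ∧ G.testBit i = false := by
  have := (List.mem_filter.1 he).2
  simpa [inM_spec h] using this

theorem freeE_nodup {R G : ℕ} : ((freeE R G).map Prod.fst).Nodup :=
  List.Nodup.sublist (List.Sublist.map _ List.filter_sublist) edgeTab_nodup

theorem cov_free {R G X : ℕ} (hX : X < 2 ^ 15) (hD : Dj X G) : Cov X R (freeE R G) := by
  intro i hi
  cases hR : R.testBit i with
  | true => simp
  | false =>
    right
    refine mem_freeE (bits_lt hX hi) hR ?_
    cases hG : G.testBit i with
    | true => exact (hD i hi hG).elim
    | false => rfl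

theorem tfb_spec {X : ℕ} (h : tfb X = true) : Tfr X := by
  have key : ∀ a b d : Fin 6, a ≠ b → a ≠ d → b ≠ d →
      (2 ^ ix a b ||| 2 ^ ix a d ||| 2 ^ ix b d) ∈ triTab := by decide +kernel
  intro a b d n1 n2 n3 h1 h2 h3
  simp only [tfb, List.all_eq_true] at h
  have := h _ (key a b d n1 n2 n3)
  simp only [Bool.not_eq_true'] at this
  have h' : Nat.land X (2 ^ ix a b ||| 2 ^ ix a d ||| 2 ^ ix b d) =
      (2 ^ ix a b ||| 2 ^ ix a d ||| 2 ^ ix b d) := by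
    show X &&& _ = _
    apply Nat.eq_of_testBit_eq
    intro i
    simp only [Nat.testBit_and, Nat.testBit_or, Nat.testBit_two_pow]
    by_cases e1 : ix a b = i
    · subst e1; simp [h1]
    by_cases e2 : ix a d = i
    · subst e2; simp [h2]
    by_cases e3 : ix b d = i
    · subst e3; simp [h3]
    simp [e1, e2, e3]
  rw [h'] at this
  simp at this

theorem kTab_tfr : ∀ K ∈ kTab, Tfr K := by
  have : ∀ K ∈ kTab, tfb K = true := by decide +kernel
  exact fun K h => tfb_spec (this K h)

theorem kTab_lt : ∀ K ∈ kTab, K < 2 ^ 15 := by decide +kernel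

theorem exists_mask (p : ℕ → Prop) : ∃ m < 2 ^ 15, ∀ i < 15, (m.testBit i = true ↔ p i) := by
  classical
  refine ⟨Nat.ofBits (n := 15) fun i => decide (p i), Nat.ofBits_lt_two_pow _, ?_⟩
  intro i hi
  rw [Nat.testBit_ofBits_lt _ _ hi]
  simp

theorem edgeTab_inj : ∀ e ∈ edgeTab, ∀ e' ∈ edgeTab, e.1 = e'.1 → e = e' := by decide +kernel

theorem leaf_spec {X G K : ℕ} (hK : Tfr K) (hK15 : K < 2 ^ 15) (hG : G < 2 ^ 15) (hD : Dj X G)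
    (hX : Tfr X) (h : leaf X G K = true) : GW (ML 17) X G := by
  unfold leaf at h
  simp only [Bool.and_eq_true] at h
  obtain ⟨h0, h⟩ := h
  have hGK : Sb G K := by
    have h0 : G &&& K = G := Nat.eq_of_beq_eq_true h0
    intro i hi
    rw [← h0, Nat.testBit_and] at hi
    simp at hi
    exact hi.2
  generalize hl : freeE X G = l at h
  generalize hlP : (l.filter fun e => inM K e.1 && illegal X e.2) = lP at h
  generalize ho : (l.filter fun e => !(inM K e.1)) = o at h
  have hsub : lP.Sublist l := hlP ▸ List.filter_sublist
  have hsubl : l.Sublist edgeTab := hl ▸ List.filter_sublist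
  have hlen : lP.length ≤ 15 := (hsub.trans hsubl).length_le
  have how : ∀ e ∈ o, WF e := by
    intro e he
    rw [← ho] at he
    exact edgeTab_wf e (hsubl.subset (List.mem_filter.1 he).1)
  classical
  obtain ⟨P, hP⟩ : ∃ P : Finset ℕ, P = (Finset.range 15).filter fun i => ∃ e ∈ lP, e.1 = 2 ^ i :=
    ⟨_, rfl⟩
  have hPc : lP.length ≤ P.card := by
    have hnd : (lP.map Prod.fst).Nodup :=
      List.Nodup.sublist (List.Sublist.map _ (hsub.trans hsubl)) edgeTab_nodup
    have h1 := List.toFinset_card_of_nodup hnd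
    rw [List.length_map] at h1
    rw [← h1]
    refine le_trans (Finset.card_le_card (t := P.image fun i => 2 ^ i) ?_) Finset.card_image_le
    intro b hb
    simp only [List.mem_toFinset, List.mem_map] at hb
    obtain ⟨e, he, rfl⟩ := hb
    obtain ⟨i, hi, h2, _⟩ := edgeTab_wf e ((hsub.trans hsubl).subset he)
    rw [Finset.mem_image]
    refine ⟨i, ?_, h2.symm⟩
    rw [hP]
    simp only [Finset.mem_filter, Finset.mem_range]
    exact ⟨hi, e, he, h2⟩
  have hPm : ∀ i ∈ P, i < 15 ∧ K.testBit i = true ∧ G.testBit i = false ∧ X.testBit i = false ∧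
      ∀ Z, Sb X Z → Tfr Z → Z.testBit i = false := by
    intro i hi
    rw [hP] at hi
    simp only [Finset.mem_filter, Finset.mem_range] at hi
    obtain ⟨hi, e, he, h2⟩ := hi
    have hel : e ∈ freeE X G := by rw [hl]; exact hsub.subset he
    have hf := freeE_free hel h2
    rw [← hlP] at he
    have h3 := (List.mem_filter.1 he).2
    simp only [Bool.and_eq_true, inM_spec h2] at h3
    exact ⟨hi, h3.1, hf.2, hf.1, fun Z hZ hT => illegal_spec (freeE_wf e hel) h2 h3.2 hZ hT⟩
  have hcov : ∀ Z, Z < 2 ^ 15 → Sb X Z → Dj Z G → Tfr Z →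
      (∀ i, Z.testBit i = true → X.testBit i = false → G.testBit i = false →
        K.testBit i = true → i ∈ P) → Cov Z X o := by
    intro Z z1 z2 z3 z4 hz i hi
    rcases cov_free (R := X) z1 z3 i hi with h | ⟨e, he, h⟩
    · exact Or.inl h
    · right
      refine ⟨e, ?_, h⟩
      have hf := freeE_free he h
      rw [← ho, ← hl, List.mem_filter]
      refine ⟨he, ?_⟩
      rw [inM_spec h]
      cases hk : K.testBit i with
      | false => rfl
      | true =>
        have := (hPm i (hz i hi hf.1 hf.2 hk)).2.2.2.2 Z z2 z4
        simp_all
  by_cases hany : (l.any fun e => inM K e.1 && !(illegal X e.2)) = true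
  · rw [if_pos hany] at h
    obtain ⟨Y, hY15, hY⟩ := exists_mask fun i => G.testBit i = true ∨
      (K.testBit i = true ∧ X.testBit i = false ∧ i ∉ P)
    have hGY : Sb G Y := fun i hi => (hY i (bits_lt hG hi)).2 (Or.inl hi)
    have hYK : Sb Y K := by
      intro i hi
      rcases (hY i (bits_lt hY15 hi)).1 hi with h | h
      · exact hGK i h
      · exact h.1
    refine ⟨Y, hY15, hGY, ?_, ?_, hK.mono hYK, ?_⟩
    · simp only [List.any_eq_true, Bool.and_eq_true, Bool.not_eq_true'] at hany
      obtain ⟨e, he, h1, h2⟩ := hany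
      obtain ⟨i, hi, h3, _⟩ := edgeTab_wf e (hsubl.subset he)
      have hf := freeE_free (hl.symm ▸ he) h3
      rw [inM_spec h3] at h1
      have : Y.testBit i = true := by
        rw [hY i hi]
        refine Or.inr ⟨h1, hf.1, ?_⟩
        intro hiP
        rw [hP] at hiP
        simp only [Finset.mem_filter, Finset.mem_range] at hiP
        obtain ⟨_, e', he', h4⟩ := hiP
        have := edgeTab_inj e (hsubl.subset he) e' ((hsub.trans hsubl).subset he') (h3.trans h4.symm)
        subst this
        rw [← hlP] at he'
        have := (List.mem_filter.1 he').2
        simp_all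
      intro hc
      rw [hc, hf.2] at this
      simp at this
    · intro i hi hi'
      rcases (hY i (bits_lt hY15 hi')).1 hi' with h | h
      · exact hD i hi h
      · simp_all
    · refine ML_mono (n := lP.length + 1) (by omega) (leaf_lemma K hK _ X Y P hY15 hPc ?_ hYK ?_)
      · intro i hi
        obtain ⟨p1, p2, p3, p4, p5⟩ := hPm i hi
        refine ⟨p1, p2, ?_, p5⟩
        by_contra hc
        rcases (hY i p1).1 (by simpa using hc) with h | h
        · simp_all
        · exact h.2.2 hi
      · intro Z z1 z2 z3 z4
        refine bnd_spec o X _ Z how h z2 (hcov Z z1 z2 (fun i a b => z3 i a (hGY i b)) z4 ?_) z4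
        intro i i1 i2 i3 i4
        by_contra hc
        exact z3 i i1 ((hY i (bits_lt z1 i1)).2 (Or.inr ⟨i4, i2, hc⟩))
  · rw [if_neg hany] at h
    have hallP : ∀ i < 15, X.testBit i = false → G.testBit i = false →
        K.testBit i = true → i ∈ P := by
      intro i hi i2 i3 i4
      obtain ⟨e, he, h1⟩ := mem_freeE hi i2 i3
      rw [hP]
      simp only [Finset.mem_filter, Finset.mem_range]
      refine ⟨hi, e, ?_, h1⟩
      rw [← hlP, List.mem_filter]
      refine ⟨hl ▸ he, ?_⟩
      by_contra hc
      apply hany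
      rw [List.any_eq_true]
      refine ⟨e, hl ▸ he, ?_⟩
      rw [inM_spec h1, i4] at hc ⊢
      simpa using hc
    cases hn : lP.length with
    | zero => rw [hn] at h; simp at h
    | succ n =>
      rw [hn] at h
      simp only at h
      obtain ⟨j, hj⟩ : P.Nonempty := by rw [← Finset.card_pos]; omega
      obtain ⟨j1, j2, j3, j4, j5⟩ := hPm j hj
      have hGY : Sb G (G ||| 2 ^ j) := by intro i hi; simp [hi]
      have hYb : ∀ i, (G ||| 2 ^ j).testBit i = true → G.testBit i = true ∨ j = i := by
        intro i hi
        simpa [Nat.testBit_or, Nat.testBit_two_pow] using hi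
      have hYK : Sb (G ||| 2 ^ j) K := sub_or hGK j2
      have hY15 : (G ||| 2 ^ j) < 2 ^ 15 := lt_of_bits fun i hi => bits_lt hK15 (hYK i hi)
      refine ⟨G ||| 2 ^ j, hY15, hGY, ?_, ?_, hK.mono hYK, ?_⟩
      · intro hc
        have : (G ||| 2 ^ j).testBit j = true := by simp [Nat.testBit_or, Nat.testBit_two_pow]
        rw [hc, j3] at this
        simp at this
      · intro i hi hi'
        rcases hYb i hi' with h | rfl
        · exact hD i hi h
        · simp_all
      · refine ML_mono (n := n + 1) (by omega)
          (leaf_lemma K hK _ X _ (P.erase j) hY15 ?_ ?_ hYK ?_)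
        · rw [Finset.card_erase_of_mem hj]; omega
        · intro i hi
          rw [Finset.mem_erase] at hi
          obtain ⟨p1, p2, p3, p4, p5⟩ := hPm i hi.2
          refine ⟨p1, p2, ?_, p5⟩
          by_contra hc
          rw [Bool.not_eq_false] at hc
          rcases hYb i hc with h | h
          · simp_all
          · exact hi.1 h.symm
        · intro Z z1 z2 z3 z4
          refine bnd_spec o X _ Z how h z2 (hcov Z z1 z2 (fun i a b => z3 i a (hGY i b)) z4 ?_) z4
          intro i i1 i2 i3 i4
          exact hallP i (bits_lt z1 i1) i2 i3 i4

/-! ### Symmetry -/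

theorem pm_testBit : ∀ (l : List ℕ) (m i : ℕ),
    (pm l m).testBit i = true ↔ ∃ h : i < l.length, m.testBit l[i] = true := by
  intro l
  induction l with
  | nil => intro m i; simp [pm]
  | cons a l ih =>
    intro m i
    have e : pm (a :: l) m = (m >>> a) % 2 + 2 * pm l m := rfl
    rw [e]
    cases i with
    | zero =>
      have : m.testBit a = decide ((m >>> a) % 2 = 1) := by
        rw [← Nat.testBit_zero, Nat.testBit_shiftRight]; simp
      rw [Nat.testBit_zero, decide_eq_true_iff]
      constructor
      · intro h
        refine ⟨by simp, ?_⟩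
        show m.testBit a = true
        rw [this, decide_eq_true_iff]
        omega
      · rintro ⟨_, h⟩
        have h : m.testBit a = true := h
        rw [this, decide_eq_true_iff] at h
        omega
    | succ i =>
      rw [Nat.testBit_succ]
      have : ((m >>> a) % 2 + 2 * pm l m) / 2 = pm l m := by omega
      rw [this, ih]
      simp

structure Sym (s : ℕ → ℕ) (π : ℕ → ℕ) : Prop where
  bit : ∀ m i, i < 15 → ((s m).testBit i = true ↔ m.testBit (π i) = true)
  lt : ∀ m, s m < 2 ^ 15
  inv : ∀ i < 15, π (π i) = i
  plt : ∀ i < 15, π i < 15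
  tfr : ∀ m, Tfr m → Tfr (s m)

namespace Sym

variable {s π : ℕ → ℕ}

theorem invol (h : Sym s π) {m : ℕ} (hm : m < 2 ^ 15) : s (s m) = m := by
  apply Sb.antisymm
  · intro i hi
    have i15 := bits_lt (h.lt _) hi
    rw [h.bit _ _ i15, h.bit _ _ (h.plt _ i15), h.inv _ i15] at hi
    exact hi
  · intro i hi
    have i15 := bits_lt hm hi
    rw [h.bit _ _ i15, h.bit _ _ (h.plt _ i15), h.inv _ i15]
    exact hi

theorem sb (h : Sym s π) {A B : ℕ} (hAB : Sb A B) : Sb (s A) (s B) := by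
  intro i hi
  have i15 := bits_lt (h.lt _) hi
  rw [h.bit _ _ i15] at hi ⊢
  exact hAB _ hi

theorem dj (h : Sym s π) {A B : ℕ} (hAB : Dj A B) : Dj (s A) (s B) := by
  intro i hi hi'
  have i15 := bits_lt (h.lt _) hi
  rw [h.bit _ _ i15] at hi hi'
  exact hAB _ hi hi'

theorem gw (h : Sym s π) {W : ℕ → ℕ → Prop}
    (hW : ∀ A B, A < 2 ^ 15 → B < 2 ^ 15 → W (s A) (s B) → W A B) {X G : ℕ}
    (hX : X < 2 ^ 15) (hG : G < 2 ^ 15) (hg : GW W (s X) (s G)) : GW W X G := by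
  obtain ⟨Y, h1, h2, h3, h4, h5, h6⟩ := hg
  refine ⟨s Y, h.lt _, ?_, ?_, ?_, h.tfr _ h5, ?_⟩
  · have := h.sb h2
    rwa [h.invol hG] at this
  · intro hc
    apply h3
    rw [← hc, h.invol h1]
  · have := h.dj h4
    rwa [h.invol hX] at this
  · apply hW _ _ hX (h.lt _)
    rwa [h.invol h1]

theorem ml (h : Sym s π) : ∀ n A B, A < 2 ^ 15 → B < 2 ^ 15 → ML n (s A) (s B) → ML n A B := by
  intro n
  induction n with
  | zero => intro A B _ _ h; exact h
  | succ n ih =>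
    intro A B hA hB hM X h1 h2 h3 h4 h5
    refine h.gw ih h1 hB (hM (s X) (h.lt _) (h.sb h2) ?_ (h.dj h4) (h.tfr _ h5))
    intro hc
    apply h3
    rw [← h.invol h1, hc, h.invol hA]

end Sym

def swapV (k : ℕ) (a : Fin 6) : Fin 6 :=
  if a.1 = k then ⟨(k + 1) % 6, by omega⟩ else if a.1 = k + 1 then ⟨k % 6, by omega⟩ else a

theorem swTab_facts : ∀ l ∈ swTab, l.length = 15 ∧ (∀ i < 15, l.getD i 15 < 15) ∧
    (∀ i < 15, l.getD (l.getD i 15) 15 = i) ∧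
    ∃ k < 5, ∀ a b : Fin 6, a ≠ b → swapV k a ≠ swapV k b ∧
      l.getD (ix a b) 15 = ix (swapV k a) (swapV k b) := by decide +kernel

theorem ix_lt : ∀ a b : Fin 6, a ≠ b → ix a b < 15 := by decide +kernel

theorem swTab_sym : ∀ l ∈ swTab, Sym (pm l) (fun i => l.getD i 15) := by
  intro l hl
  obtain ⟨h1, h2, h3, k, _, h4⟩ := swTab_facts l hl
  have hbit : ∀ m i, i < 15 → ((pm l m).testBit i = true ↔ m.testBit (l.getD i 15) = true) := by
    intro m i hi
    rw [pm_testBit, List.getD_eq_getElem _ _ (by omega)]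
    simp [h1, hi]
  refine ⟨hbit, ?_, h3, h2, ?_⟩
  · intro m
    apply lt_of_bits
    intro i hi
    rw [pm_testBit] at hi
    obtain ⟨h, _⟩ := hi
    omega
  · intro m hm a b d n1 n2 n3 b1 b2 b3
    rw [hbit _ _ (ix_lt _ _ n1), (h4 a b n1).2] at b1
    rw [hbit _ _ (ix_lt _ _ n2), (h4 a d n2).2] at b2
    rw [hbit _ _ (ix_lt _ _ n3), (h4 b d n3).2] at b3
    exact hm _ _ _ (h4 a b n1).1 (h4 a d n2).1 (h4 b d n3).1 b1 b2 b3

theorem chkR_spec : ∀ f R G, G < 2 ^ 15 → chkR f R G = true → ML (f + 17) R G := by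
  intro f
  induction f with
  | zero => intro R G _ h; simp [chkR] at h
  | succ f ih =>
    intro R G hG h
    have key : ∀ X, X < 2 ^ 15 → Sb R X → X ≠ R → Dj X G → Tfr X → GW (ML (f + 17)) X G := by
      intro X
      induction X using Nat.strong_induction_on with
      | _ X IH =>
      intro h1 h2 h3 h4 h5
      have hk := enumR_spec _ _ R X freeE_wf h h2 (cov_free h1 h4) h5
      simp only [Bool.or_eq_true, List.any_eq_true, Bool.and_eq_true, List.mem_filter] at hk
      rcases hk with ((hk | hk) | hk) | hk
      · exact (h3 (Nat.eq_of_beq_eq_true hk)).elim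
      · obtain ⟨l, ⟨hl, hR, hG'⟩, hlt⟩ := hk
        have hR := Nat.eq_of_beq_eq_true hR
        have hG' := Nat.eq_of_beq_eq_true hG'
        have hlt : pm l X < X := by simpa [Nat.blt] using hlt
        have hs := swTab_sym l hl
        refine hs.gw (hs.ml _) h1 hG ?_
        rw [hG']
        refine IH _ hlt (hs.lt _) ?_ ?_ ?_ (hs.tfr _ h5)
        · have := hs.sb h2; rwa [hR] at this
        · intro hc
          apply h3
          rw [← hs.invol h1, hc, hR]
        · have := hs.dj h4; rwa [hG'] at this
      · obtain ⟨K, hK, hk⟩ := hk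
        exact (leaf_spec (kTab_tfr K hK) (kTab_lt K hK) hG h4 h5 hk).mono
          fun A B hAB => ML_mono (by omega) hAB
      · obtain ⟨⟨R', G', g⟩, _, hk⟩ := hk
        obtain ⟨⟨⟨⟨⟨⟨k1, k2⟩, k3⟩, k4⟩, k5⟩, k6⟩, k7⟩ := hk
        simp only at k1 k2 k3 k4 k5 k6 k7
        have k3 : g < 2 ^ 15 := by simpa [Nat.blt] using k3
        have k5 : g &&& (X ||| G) = 0 := Nat.eq_of_beq_eq_true k5
        have k7 : chkR f X (G ||| g) = true := k7
        have hb : ∀ i, g.testBit i = true → X.testBit i = false ∧ G.testBit i = false := by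
          intro i hi
          have := congrArg (fun z => z.testBit i) k5
          simpa [Nat.testBit_and, Nat.testBit_or, hi] using this
        have hY : (G ||| g) < 2 ^ 15 := Nat.or_lt_two_pow hG k3
        refine ⟨G ||| g, hY, ?_, ?_, ?_, tfb_spec k6, ih _ _ hY k7⟩
        · intro i hi; simp [hi]
        · intro hc
          have : g = 0 := by
            apply Nat.eq_of_testBit_eq
            intro i
            rw [Nat.zero_testBit]
            by_contra hi
            simp only [Bool.not_eq_false] at hi
            have h6 : (G ||| g).testBit i = true := by simp [hi]
            rw [hc, (hb i hi).2] at h6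
            simp at h6
          subst this
          simp at k4
        · intro i hi hi'
          rw [Nat.testBit_or, Bool.or_eq_true] at hi'
          rcases hi' with h | h
          · exact h4 i hi h
          · have := (hb i h).1
            simp_all
    exact key

theorem chk_ok : chkR 10 0 0 = true := by decide +kernel

theorem ml_start : ML 27 0 0 := chkR_spec 10 0 0 (by norm_num) chk_ok

/-! ### From masks to positions -/

theorem ix_symm : ∀ a b : Fin 6, ix a b = ix b a := by decide +kernel

def idx (e : Edge6) : ℕ := Sym2.lift ⟨ix, ix_symm⟩ e.1

theorem idx_mk (a b : Fin 6) (h : a ≠ b) : idx (mkEdge6 a b h) = ix a b := rfl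

theorem edge_cases (e : Edge6) : ∃ a b h, e = mkEdge6 a b h := by
  obtain ⟨e, he⟩ := e
  induction e using Sym2.ind with
  | _ a b => exact ⟨a, b, by simpa using he, rfl⟩

theorem idx_lt (e : Edge6) : idx e < 15 := by
  obtain ⟨a, b, h, rfl⟩ := edge_cases e
  exact ix_lt a b h

theorem idx_inj {e e' : Edge6} (h : idx e = idx e') : e = e' := by
  have key : ∀ a b c d : Fin 6, a ≠ b → c ≠ d → ix a b = ix c d →
      (a = c ∧ b = d) ∨ (a = d ∧ b = c) := by decide +kernel
  obtain ⟨a, b, h1, rfl⟩ := edge_cases e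
  obtain ⟨c, d, h2, rfl⟩ := edge_cases e'
  apply Subtype.ext
  rw [mkEdge6, mkEdge6, Sym2.eq_iff]
  exact key a b c d h1 h2 h

theorem idx_surj {i : ℕ} (hi : i < 15) : ∃ e, idx e = i := by
  have key : ∀ i < 15, ∃ a b : Fin 6, a ≠ b ∧ ix a b = i := by decide +kernel
  obtain ⟨a, b, h, h'⟩ := key i hi
  exact ⟨mkEdge6 a b h, h'⟩

def toPos (R G : ℕ) : Pos := fun e =>
  if R.testBit (idx e) then some true else if G.testBit (idx e) then some false else none

theorem tri_red (R G : ℕ) : ¬ HasMonoTri (toPos R G) true ↔ Tfr R := by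
  have h : ∀ e, toPos R G e = some true ↔ R.testBit (idx e) = true := by
    intro e; unfold toPos; split_ifs <;> simp_all
  simp only [HasMonoTri, h, idx_mk, Tfr]
  push Not
  constructor
  · intro H a b d h1 h2 h3 b1 b2 b3
    exact H a b d h1 h2 h3 b1 b2 b3
  · intro H a b d h1 h2 h3 b1 b2 b3
    exact H a b d h1 h2 h3 b1 b2 b3

theorem tri_green {R G : ℕ} (hD : Dj R G) : ¬ HasMonoTri (toPos R G) false ↔ Tfr G := by
  have h : ∀ e, toPos R G e = some false ↔ G.testBit (idx e) = true := by
    intro e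
    have := hD (idx e)
    unfold toPos; split_ifs <;> simp_all
  simp only [HasMonoTri, h, idx_mk, Tfr]
  push Not
  constructor
  · intro H a b d h1 h2 h3 b1 b2 b3
    exact H a b d h1 h2 h3 b1 b2 b3
  · intro H a b d h1 h2 h3 b1 b2 b3
    exact H a b d h1 h2 h3 b1 b2 b3

def WPos (p : Pos) : Prop := ∃ n R G, R < 2 ^ 15 ∧ G < 2 ^ 15 ∧ Dj R G ∧ p = toPos R G ∧ ML n R G

theorem wpos_start : WPos startPos :=
  ⟨27, 0, 0, by norm_num, by norm_num, by intro i; simp, by funext e; simp [startPos, toPos],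
    ml_start⟩

theorem wpos_step {p : Pos} (hp : WPos p) {s : Finset Edge6} (hs : Legal p true s) :
    ∃ g, Legal (colorSet p true s) false g ∧ WPos (colorSet (colorSet p true s) false g) := by
  obtain ⟨n, R, G, hR, hG, hD, rfl, hM⟩ := hp
  obtain ⟨⟨e0, he0⟩, hs2, hs3⟩ := hs
  obtain ⟨X, hX15, hX⟩ := exists_mask fun i => R.testBit i = true ∨ ∃ e ∈ s, idx e = i
  have hXe : ∀ e, X.testBit (idx e) = true ↔ R.testBit (idx e) = true ∨ e ∈ s := by
    intro e
    rw [hX _ (idx_lt e)]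
    constructor
    · rintro (h | ⟨e', h, h'⟩)
      · exact Or.inl h
      · exact Or.inr (idx_inj h' ▸ h)
    · rintro (h | h)
      · exact Or.inl h
      · exact Or.inr ⟨e, h, rfl⟩
  have hfree : ∀ e ∈ s, R.testBit (idx e) = false ∧ G.testBit (idx e) = false := by
    intro e he
    have := hs2 e he
    unfold toPos at this
    split_ifs at this <;> simp_all
  have hcol : colorSet (toPos R G) true s = toPos X G := by
    funext e
    have h1 := hXe e
    unfold colorSet toPos
    by_cases he : e ∈ s
    · rw [if_pos he, if_pos (h1.2 (Or.inr he))]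
    · rw [if_neg he]
      have : X.testBit (idx e) = R.testBit (idx e) := by
        rw [Bool.eq_iff_iff, h1]; simp [he]
      rw [this]
  rw [hcol] at hs3 ⊢
  have hRX : Sb R X := fun i hi => (hX i (bits_lt hR hi)).2 (Or.inl hi)
  have hne : X ≠ R := by
    intro hc
    have := (hXe e0).2 (Or.inr he0)
    rw [hc, (hfree e0 he0).1] at this
    simp at this
  have hDX : Dj X G := by
    intro i hi hi'
    obtain ⟨e, rfl⟩ := idx_surj (bits_lt hX15 hi)
    rcases (hXe e).1 hi with h | h
    · exact hD _ h hi'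
    · have := (hfree e h).2
      simp_all
  cases n with
  | zero => exact hM.elim
  | succ n =>
    obtain ⟨Y, y1, y2, y3, y4, y5, y6⟩ := hM X hX15 hRX hne hDX ((tri_red X G).1 hs3)
    classical
    obtain ⟨g, hg⟩ : ∃ g : Finset Edge6, ∀ e, e ∈ g ↔
        Y.testBit (idx e) = true ∧ G.testBit (idx e) = false :=
      ⟨Finset.univ.filter fun e => Y.testBit (idx e) = true ∧ G.testBit (idx e) = false, by simp⟩
    have hcol2 : colorSet (toPos X G) false g = toPos X Y := by
      funext e
      have h1 := hg e
      have h2 := y4 (idx e)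
      have h3 := y2 (idx e)
      unfold colorSet toPos
      by_cases he : e ∈ g
      · rw [if_pos he]
        have := h1.1 he
        have hx : X.testBit (idx e) = false := by
          by_contra hc
          exact h2 (by simpa using hc) this.1
        simp [hx, this.1]
      · rw [if_neg he]
        have : Y.testBit (idx e) = G.testBit (idx e) := by
          rw [Bool.eq_iff_iff]
          constructor
          · intro hy
            by_contra hc
            exact he (h1.2 ⟨hy, by simpa using hc⟩)
          · exact h3
        rw [this]
    refine ⟨g, ⟨?_, ?_, ?_⟩, ?_⟩
    · by_contra hc
      rw [Finset.not_nonempty_iff_eq_empty] at hc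
      apply y3
      refine Sb.antisymm ?_ y2
      intro i hi
      obtain ⟨e, rfl⟩ := idx_surj (bits_lt y1 hi)
      by_contra hG'
      have := (hg e).2 ⟨hi, by simpa using hG'⟩
      simp [hc] at this
    · intro e he
      have h1 := (hg e).1 he
      have hx : X.testBit (idx e) = false := by
        by_contra hc
        exact y4 _ (by simpa using hc) h1.1
      simp [toPos, hx, h1.2]
    · rw [hcol2, tri_green y4]
      exact y5
    · rw [hcol2]
      exact ⟨n, X, Y, hX15, y1, y4, rfl, y6⟩

/-! ### The strategy -/

theorem posFrom_append (ms : List (Finset Edge6)) : ∀ (p : Pos) (k : ℕ) (s : Finset Edge6),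
    posFrom p k (ms ++ [s]) = colorSet (posFrom p k ms) (playerAt (k + ms.length)) s := by
  induction ms with
  | nil => intro p k s; simp [posFrom]
  | cons a ms ih =>
    intro p k s
    simp only [List.cons_append, posFrom, ih, List.length_cons]
    congr 2
    omega

theorem posAfter_succ (ms : List (Finset Edge6)) {i : ℕ} (h : i < ms.length) :
    posAfter (ms.take (i + 1)) =
      colorSet (posAfter (ms.take i)) (playerAt i) (ms.get ⟨i, h⟩) := by
  rw [List.take_succ_eq_append_getElem h, posAfter, posFrom_append]
  simp [posAfter, List.length_take, Nat.min_eq_left h.le]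

def Good (p : Pos) (g : Finset Edge6) : Prop := Legal p false g ∧ WPos (colorSet p false g)

open Classical in
noncomputable def strat (p : Pos) : Finset Edge6 :=
  if h : ∃ g, Good p g then h.choose else ∅

theorem strat_spec {p : Pos} (h : ∃ g, Good p g) : Good p (strat p) := by
  unfold strat
  rw [dif_pos h]
  exact h.choose_spec

theorem invariant (ms : List (Finset Edge6)) (h : FollowsGreen strat ms) : ∀ i ≤ ms.length,
    (playerAt i = true → WPos (posAfter (ms.take i))) ∧
    (playerAt i = false → ∃ g, Good (posAfter (ms.take i)) g) := by
  intro i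
  induction i with
  | zero =>
    intro _
    refine ⟨fun _ => ?_, fun h => by simp [playerAt] at h⟩
    simpa [posAfter, posFrom] using wpos_start
  | succ i ih =>
    intro hi
    have hi' : i < ms.length := hi
    obtain ⟨h1, h2⟩ := ih hi'.le
    obtain ⟨hL, hS⟩ := h i hi'
    rw [posAfter_succ ms hi']
    cases hp : playerAt i with
    | true =>
      have hq : playerAt (i + 1) = false := by
        simp [playerAt] at hp ⊢; omega
      rw [hp] at hL
      rw [hq]
      refine ⟨fun h => by simp at h, fun _ => wpos_step (h1 hp) hL⟩
    | false =>
      have hq : playerAt (i + 1) = true := by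
        simp [playerAt] at hp ⊢; omega
      rw [hq]
      refine ⟨fun _ => ?_, fun h => by simp at h⟩
      rw [hS hp]
      exact (strat_spec (h2 hp)).2

end SimProof

open SimProof in
/-- The second player, Green, has a winning strategy in Sim⁺ (the avoidance⁺ variant of
Sim where each move colors a nonempty set of uncolored edges): a strategy `σ` such that
in every play in which Green follows it, whenever it is Green's turn the move prescribed
by `σ` is legal — hence Green is never unable to move, and since plays are finite, every
play following `σ` ends with Red being the player unable to make a legal move. -/
theorem green_wins_sim_plus :
    ∃ σ : Pos → Finset Edge6, ∀ ms : List (Finset Edge6), FollowsGreen σ ms →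
      playerAt ms.length = false →
        Legal (posAfter ms) false (σ (posAfter ms)) := by
  refine ⟨strat, fun ms h hp => ?_⟩
  have := (invariant ms h ms.length le_rfl).2 hp
  rw [List.take_length] at this
  exact (strat_spec this).1
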